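/- For every integer n ≥ 1, the triple convolution ∑_{i₁+i₂+i₃=n, i₁,i₂,i₃≥0} (2n)!/((2i₁)!(2i₂)!(2i₃)!) · 𝔠_{2i₁} 𝔠_{2i₂} 𝔠_{2i₃} = (2n-1)(n-1) · 𝔠_{2n} + n(2n-1)(2n-3)² · 𝔠_{2n-2}. -/

import Mathlib

/-- Stirling numbers of the first kind with level 2. -/
def T2 : ℕ → ℕ → ℕ
  | 0, 0 => 1
  | 0, _ + 1 => 0
  | _ + 1, 0 => 0
  | n + 1, m + 1 => T2 n m + n ^ 2 * T2 n (m + 1)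

/-- Cauchy numbers with level 2: `cauchy2 n = 𝔠_{2n}`. -/
def cauchy2 (n : ℕ) : ℚ :=
  ∑ m ∈ Finset.range (n + 1), (-4 : ℚ) ^ (n - m) * (T2 n m : ℚ) / (2 * (m : ℚ) + 1)

/-- `odFact i = (2i-1)!!`, with `odFact 0 = (-1)!! = 1`. -/
def odFact : ℕ → ℚ
  | 0 => 1
  | i + 1 => (2 * (i : ℚ) + 1) * odFact i

/-- `ddf j = (2j-1)!!`, the odd double factorial extended to all integers:
for `j ≥ 0` it is `(2j-1)(2j-3)⋯1` (with `(-1)!! = 1`), and for `j = -i < 0`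
it is `(-(2i+1))!! = (-1)^i/(2i-1)!!`. -/
def ddf (j : ℤ) : ℚ :=
  if 0 ≤ j then odFact j.toNat else (-1 : ℚ) ^ (-j).toNat / odFact (-j).toNat

open PowerSeries in
lemma coeff_theta (f : PowerSeries ℚ) (n : ℕ) :
    coeff n (X * d⁄dX ℚ f) = n * coeff n f := by
  cases n with
  | zero => simp
  | succ n => rw [coeff_succ_X_mul, coeff_derivative]; push_cast; ring

open PowerSeries in
lemma coeff_theta2 (f : PowerSeries ℚ) (n : ℕ) :
    coeff n (X ^ 2 * d⁄dX ℚ (d⁄dX ℚ f)) = n * (n - 1) * coeff n f := by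
  rcases n with _ | _ | n
  · simp
  · rw [pow_two, mul_assoc, coeff_succ_X_mul]; simp
  · rw [show n + 1 + 1 = n + 2 from rfl, coeff_X_pow_mul, coeff_derivative, coeff_derivative]; push_cast; ring

/-- coefficients of arcsinh -/
def asC : ℕ → ℚ
  | 0 => 0
  | 1 => 1
  | n + 2 => -(n : ℚ) ^ 2 * asC n / ((n + 2) * (n + 1))

/-- arcsinh -/
noncomputable def asS : PowerSeries ℚ := PowerSeries.mk asC

open PowerSeries in
lemma asS_ode : (1 + X ^ 2) * d⁄dX ℚ (d⁄dX ℚ asS) + X * d⁄dX ℚ asS = 0 := by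
  ext n
  rw [add_mul, one_mul, map_add, map_add, coeff_theta, coeff_theta2, coeff_derivative,
    coeff_derivative]
  simp only [asS, coeff_mk, asC, map_zero]
  push_cast
  have h1 : (n : ℚ) + 1 ≠ 0 := by positivity
  have h2 : (n : ℚ) + 2 ≠ 0 := by positivity
  field_simp
  ring

open PowerSeries in
lemma asS_sq : (1 + X ^ 2) * (d⁄dX ℚ asS) ^ 2 = 1 := by
  apply derivative.ext
  · have h := asS_ode
    have e : d⁄dX ℚ ((1 + X ^ 2) * (d⁄dX ℚ asS) ^ 2) =
        2 * d⁄dX ℚ asS * ((1 + X ^ 2) * d⁄dX ℚ (d⁄dX ℚ asS) + X * d⁄dX ℚ asS) := by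
      simp only [Derivation.leibniz, Derivation.leibniz_pow, map_add, Derivation.map_one_eq_zero,
        derivative_X, smul_eq_mul, nsmul_eq_mul]
      push_cast
      ring
    rw [e, h]; simp
  · have : constantCoeff (d⁄dX ℚ asS) = 1 := by
      rw [← coeff_zero_eq_constantCoeff_apply, coeff_derivative]; simp [asS, asC]
    simp [this]

/-- normalized power coefficients -/
noncomputable def ww (n m : ℕ) : ℚ := (n.factorial : ℚ) / m.factorial * PowerSeries.coeff n (asS ^ m)

open PowerSeries in
lemma ww_rec (n m : ℕ) : ww (n + 2) (m + 2) = ww n m - n ^ 2 * ww n (m + 2) := by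
  have key : (1 + X ^ 2) * d⁄dX ℚ (d⁄dX ℚ (asS ^ (m + 2))) + X * d⁄dX ℚ (asS ^ (m + 2))
      = C (((m : ℚ) + 2) * (m + 1)) * asS ^ m := by
    have h := asS_ode
    have h2 := asS_sq
    simp only [Derivation.leibniz, Derivation.leibniz_pow, smul_eq_mul, nsmul_eq_mul, map_natCast,
      Derivation.map_natCast, map_add, map_mul, map_one, Nat.add_sub_cancel, map_ofNat,
      show m + 2 - 1 = m + 1 by omega, Derivation.map_one_eq_zero]
    push_cast
    linear_combination ((m : PowerSeries ℚ) + 2) * asS ^ (m + 1) * h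
      + ((m : PowerSeries ℚ) + 2) * (m + 1) * asS ^ m * h2
  have := congrArg (coeff n) key
  rw [add_mul, one_mul, map_add, map_add, coeff_theta, coeff_theta2, coeff_derivative,
    coeff_derivative, coeff_C_mul] at this
  simp only [ww, Nat.factorial_succ]
  push_cast at this ⊢
  have hm : (m.factorial : ℚ) ≠ 0 := by positivity
  have h1 : (m : ℚ) + 1 ≠ 0 := by positivity
  have h2 : (m : ℚ) + 1 + 1 ≠ 0 := by positivity
  field_simp
  linear_combination this

lemma ww_zero (n : ℕ) : ww (n + 1) 0 = 0 := by
  simp [ww, PowerSeries.coeff_one]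

lemma ww_00 : ww 0 0 = 1 := by simp [ww]

lemma ww_11 : ww 1 1 = 1 := by simp [ww, asS, asC]

lemma ww_one (n : ℕ) : ww (n + 2) 1 = - n ^ 2 * ww n 1 := by
  simp only [ww, asS, pow_one, PowerSeries.coeff_mk, asC, Nat.factorial_succ]
  push_cast
  field_simp
  ring

open PowerSeries in
lemma as_dvd : (X : PowerSeries ℚ) ∣ asS := by
  rw [X_dvd_iff, ← coeff_zero_eq_constantCoeff_apply]; simp [asS, asC]

open PowerSeries in
lemma ww_lt {n m : ℕ} (h : n < m) : ww n m = 0 := by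
  have := X_pow_dvd_iff.1 (pow_dvd_pow_of_dvd as_dvd m) n h
  simp [ww, this]

lemma ww_odd (n m : ℕ) : ww (2 * n + 1) (2 * m) = 0 := by
  induction n generalizing m with
  | zero =>
    cases m with
    | zero => exact ww_zero 0
    | succ m => exact ww_lt (by omega)
  | succ n ih =>
    cases m with
    | zero => exact ww_zero _
    | succ m =>
      have := ww_rec (2 * n + 1) (2 * m)
      rw [show 2 * (n + 1) + 1 = 2 * n + 1 + 2 by ring, show 2 * (m + 1) = 2 * m + 2 by ring,
        this, ih, show 2 * m + 2 = 2 * (m + 1) by ring, ih]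
      simp

lemma T2_lt (n m : ℕ) (h : n < m) : T2 n m = 0 := by
  induction n generalizing m with
  | zero => cases m with
    | zero => omega
    | succ m => simp [T2]
  | succ n ih => cases m with
    | zero => omega
    | succ m => simp [T2, ih m (by omega), ih (m + 1) (by omega)]

lemma ww_even (n m : ℕ) : ww (2 * n) (2 * m) = (-4) ^ (n - m) * (T2 n m : ℚ) := by
  induction n generalizing m with
  | zero =>
    cases m with
    | zero => simp [T2, ww_00]
    | succ m => rw [ww_lt (by omega)]; simp [T2]
  | succ n ih =>
    cases m with
    | zero => rw [show 2 * (n + 1) = 2 * n + 1 + 1 by ring, mul_zero, ww_zero]; simp [T2]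
    | succ m =>
      have := ww_rec (2 * n) (2 * m)
      rw [show 2 * (n + 1) = 2 * n + 2 by ring, show 2 * (m + 1) = 2 * m + 2 by ring,
        this, ih, show 2 * m + 2 = 2 * (m + 1) by ring, ih]
      simp only [T2, Nat.add_sub_add_right]
      push_cast
      rcases Nat.lt_or_ge n (m + 1) with h | h
      · rw [T2_lt n (m + 1) h]; simp
      · obtain ⟨k, rfl⟩ := Nat.exists_eq_add_of_le h
        rw [show m + 1 + k - m = k + 1 by omega, show m + 1 + k - (m + 1) = k by omega]
        push_cast
        ring

lemma ww_sum (k N : ℕ) (h : k ≤ 2 * N) :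
    ∑ m ∈ Finset.range N, ww k (2 * m + 1) = if k = 1 then 1 else 0 := by
  induction k using Nat.twoStepInduction generalizing N with
  | zero => exact Finset.sum_eq_zero fun m _ => ww_lt (by omega)
  | one =>
    obtain ⟨N, rfl⟩ : ∃ M, N = M + 1 := ⟨N - 1, by omega⟩
    rw [Finset.sum_range_succ', Finset.sum_eq_zero fun m _ => ww_lt (by omega)]
    simp [ww_11]
  | more k ih _ =>
    obtain ⟨N, rfl⟩ : ∃ M, N = M + 1 := ⟨N - 1, by omega⟩
    have h1 := ih N (by omega)
    have h2 := ih (N + 1) (by omega)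
    rw [Finset.sum_range_succ'] at h2 ⊢
    simp only [mul_zero, zero_add, mul_add, mul_one] at h2 ⊢
    have e : ∀ m, ww (k + 2) (2 * m + 2 + 1) = ww k (2 * m + 1) - k ^ 2 * ww k (2 * m + 2 + 1) :=
      fun m => ww_rec k (2 * m + 1)
    simp only [e, Finset.sum_sub_distrib, ← Finset.mul_sum, ww_one, h1]
    have : (if k = 1 then (1 : ℚ) else 0) - k ^ 2 * (if k = 1 then 1 else 0) = 0 := by
      split_ifs with hk
      · subst hk; norm_num
      · simp
    rw [if_neg (show ¬ (k + 2 = 1) by omega)]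
    linear_combination this - (k : ℚ) ^ 2 * h2

/-- half series -/
noncomputable def GG : PowerSeries ℚ := PowerSeries.mk fun n => cauchy2 n / (2 * n).factorial

/-- t / arcsinh t -/
noncomputable def FF : PowerSeries ℚ := PowerSeries.expand 2 two_ne_zero GG

open PowerSeries in
lemma FF_even (n : ℕ) : coeff (2 * n) FF = cauchy2 n / (2 * n).factorial := by
  rw [FF, coeff_expand_mul, GG, coeff_mk]

open PowerSeries in
lemma FF_odd (n : ℕ) : coeff (2 * n + 1) FF = 0 := by
  rw [FF, coeff_expand_of_not_dvd]; omega

open PowerSeries in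
lemma FF_trunc (N k : ℕ) (h : k < 2 * N) :
    coeff k FF = coeff k (∑ m ∈ Finset.range N, C (1 / ((2 * m + 1).factorial : ℚ)) * asS ^ (2 * m)) := by
  have e : coeff k (∑ m ∈ Finset.range N, C (1 / ((2 * m + 1).factorial : ℚ)) * asS ^ (2 * m))
      = (∑ m ∈ Finset.range N, ww k (2 * m) / (2 * m + 1)) / k.factorial := by
    rw [map_sum, Finset.sum_div]
    refine Finset.sum_congr rfl fun m _ => ?_
    rw [coeff_C_mul, ww, Nat.factorial_succ]
    push_cast
    field_simp
  rw [e]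
  obtain ⟨n, rfl | rfl⟩ := Nat.even_or_odd' k
  · rw [FF_even, cauchy2]
    congr 1
    rw [← Finset.sum_subset (Finset.range_subset_range.2 (show n + 1 ≤ N by omega))]
    · exact Finset.sum_congr rfl fun m _ => by rw [ww_even]
    · intro m _ hm
      rw [Finset.mem_range, not_lt] at hm
      rw [ww_lt (by omega), zero_div]
  · rw [FF_odd]
    simp [ww_odd]

open PowerSeries in
lemma FF_mul : FF * asS = X := by
  ext k
  set P : PowerSeries ℚ :=
    ∑ m ∈ Finset.range (k + 1), C (1 / ((2 * m + 1).factorial : ℚ)) * asS ^ (2 * m) with hP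
  have hd : (X : PowerSeries ℚ) ^ (2 * (k + 1)) ∣ FF - P := by
    rw [X_pow_dvd_iff]
    intro i hi
    rw [map_sub, FF_trunc (k + 1) i hi, sub_self]
  have h0 := X_pow_dvd_iff.1 (hd.mul_right asS) k (by omega)
  rw [sub_mul, map_sub, sub_eq_zero] at h0
  rw [h0, hP, Finset.sum_mul, map_sum, coeff_X, ← ww_sum k (k + 1) (by omega)]
  have hs := ww_sum k (k + 1) (by omega)
  have e : ∀ m, coeff k (C (1 / ((2 * m + 1).factorial : ℚ)) * asS ^ (2 * m) * asS) =
      ww k (2 * m + 1) / k.factorial := by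
    intro m
    rw [mul_assoc, ← pow_succ, coeff_C_mul, ww]
    field_simp
  simp only [e, ← Finset.sum_div, hs]
  split_ifs with hk
  · subst hk; simp
  · simp

open PowerSeries in
lemma FF_ode : 2 * FF ^ 3 = (X ^ 2 * d⁄dX ℚ (d⁄dX ℚ FF) - 2 * (X * d⁄dX ℚ FF) + 2 * FF)
    + X ^ 2 * (X ^ 2 * d⁄dX ℚ (d⁄dX ℚ FF) - X * d⁄dX ℚ FF + FF) := by
  have h0 := FF_mul
  have h1 := congrArg (d⁄dX ℚ) h0
  have h2 := congrArg (d⁄dX ℚ) h1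
  simp only [Derivation.leibniz, smul_eq_mul, map_add, derivative_X,
    Derivation.map_one_eq_zero] at h1 h2
  have hA := asS_ode
  have hB := asS_sq
  have hne : asS ≠ 0 := by
    intro h
    rw [h, mul_zero] at h0
    exact X_ne_zero h0.symm
  apply mul_right_cancel₀ (pow_ne_zero 3 hne)
  generalize d⁄dX ℚ (d⁄dX ℚ FF) = F2 at *
  generalize d⁄dX ℚ (d⁄dX ℚ asS) = A2 at *
  generalize d⁄dX ℚ FF = F1 at *
  generalize d⁄dX ℚ asS = A1 at *
  generalize asS = A at *
  generalize FF = F at *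
  generalize (X : PowerSeries ℚ) = t at *
  have e1 : A ^ 2 * F1 = A - t * A1 := by linear_combination A * h1 - A1 * h0
  have e2 : A ^ 3 * F2 = -2 * A1 * (A - t * A1) - t * A * A2 := by
    linear_combination A ^ 2 * h2 - 2 * A1 * e1 - A * A2 * h0
  have e3 : (1 + t ^ 2) * (A ^ 3 * F2) = -2 * A * A1 * (1 + t ^ 2) + 2 * t + t ^ 2 * A * A1 := by
    linear_combination (1 + t ^ 2) * e2 + 2 * t * hB - t * A * hA
  have e4 : F ^ 3 * A ^ 3 = t ^ 3 := by rw [← mul_pow, h0]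
  linear_combination 2 * e4 - t ^ 2 * e3 + t * (2 + t ^ 2) * A * e1 - (2 + t ^ 2) * A ^ 2 * h0

open PowerSeries in
lemma sum_eq (n : ℕ) : ∑ x ∈ Finset.Nat.antidiagonalTuple 3 n,
        (Nat.multinomial Finset.univ (fun j => 2 * x j) : ℚ) * ∏ j, cauchy2 (x j)
      = (2 * n).factorial * coeff (2 * n) (FF ^ 3) := by
  rw [FF, ← map_pow, coeff_expand_mul]
  have : GG ^ 3 = ∏ _j : Fin 3, GG := by simp
  rw [this, coeff_prod, Finset.mul_sum]
  refine Finset.sum_bij' (fun x _ => Finsupp.equivFunOnFinite.symm x) (fun x _ => ⇑x) ?_ ?_ ?_ ?_ ?_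
  · intro x hx
    rw [Finset.Nat.mem_antidiagonalTuple] at hx
    simpa [Finset.mem_finsuppAntidiag] using hx
  · intro x hx
    rw [Finset.Nat.mem_antidiagonalTuple]
    simpa [Finset.mem_finsuppAntidiag] using hx
  · intro x _; rfl
  · intro x _; ext; rfl
  · intro x hx
    rw [Finset.Nat.mem_antidiagonalTuple] at hx
    have hs := Nat.multinomial_spec Finset.univ (fun j => 2 * x j)
    rw [← Finset.mul_sum, hx] at hs
    rw [← hs]
    simp only [GG, coeff_mk, Finsupp.equivFunOnFinite_symm_apply_apply, Finset.prod_div_distrib]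
    push_cast
    have : (∏ j, ((2 * x j).factorial : ℚ)) ≠ 0 :=
      Finset.prod_ne_zero_iff.2 fun j _ => by positivity
    field_simp

open PowerSeries in
theorem statement5 (n : ℕ) (hn : 1 ≤ n) :
    ∑ x ∈ Finset.Nat.antidiagonalTuple 3 n,
        (Nat.multinomial Finset.univ (fun j => 2 * x j) : ℚ) * ∏ j, cauchy2 (x j) =
    (2 * (n : ℚ) - 1) * ((n : ℚ) - 1) * cauchy2 n +
      (n : ℚ) * (2 * (n : ℚ) - 1) * (2 * (n : ℚ) - 3) ^ 2 * cauchy2 (n - 1) := by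
  rw [sum_eq]
  obtain ⟨k, rfl⟩ : ∃ k, n = k + 1 := ⟨n - 1, by omega⟩
  have h := congrArg (coeff (2 * (k + 1))) FF_ode
  have c2 : (2 : PowerSeries ℚ) = C 2 := (map_ofNat C 2).symm
  rw [map_add, show 2 * (k + 1) = 2 * k + 2 by ring, coeff_X_pow_mul, c2] at h
  simp only [map_add, map_sub, coeff_C_mul, coeff_theta, coeff_theta2] at h
  rw [show 2 * k + 2 = 2 * (k + 1) by ring] at h
  rw [FF_even, FF_even] at h
  have hf : ((2 * (k + 1)).factorial : ℚ) = (2 * k + 2) * (2 * k + 1) * (2 * k).factorial := by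
    rw [show 2 * (k + 1) = 2 * k + 1 + 1 by ring, Nat.factorial_succ, Nat.factorial_succ]
    push_cast; ring
  rw [Nat.add_sub_cancel]
  rw [hf] at h ⊢
  have hk : ((2 * k).factorial : ℚ) ≠ 0 := by positivity
  have h1 : (k : ℚ) + 1 ≠ 0 := by positivity
  have h2 : 2 * (k : ℚ) + 1 ≠ 0 := by positivity
  generalize coeff (2 * (k + 1)) (FF ^ 3) = Z at *
  push_cast at h ⊢
  rw [show Z = (2 * Z) / 2 by ring, h]
  field_simp
  ring
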